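/- arXiv:2604.15266 — 9 statements merged into one kernel-verified Lean document; each statement's English description precedes it below -/
import Mathlib

section
/- Characterization of sound prophecy as a safety problem (Theorem 5.2): let (ι, τ, β) be a safety problem over S, W a witness type, and P : S → W → Prop a prophecy predicate. Then P is a sound prophecy for (ι, τ, β) if and only if the soundness problem Π^sound_P is safe. -/
variable {S W : Type*}

/-- The safety problem `(ι, τ, β)` is safe if there is no finite `τ`-trace from an
initial state to a bad state. -/
def IsSafe {A : Type*} (init : Set A) (tr : Set (A × A)) (bad : Set A) : Prop :=
  ¬ ∃ (n : ℕ) (σ : ℕ → A), (∀ i < n, (σ i, σ (i + 1)) ∈ tr) ∧ σ 0 ∈ init ∧ σ n ∈ bad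

/-- `P` is a sound prophecy for `(ι, τ, β)`: every finite error trace admits a witness
`w` satisfying `P` at every point of the trace. -/
def IsSoundProphecy (ι : Set S) (τ : Set (S × S)) (β : Set S) (P : S → W → Prop) : Prop :=
  ∀ (n : ℕ) (σ : ℕ → S), (∀ i < n, (σ i, σ (i + 1)) ∈ τ) → σ 0 ∈ ι → σ n ∈ β →
    ∃ w : W, ∀ i ≤ n, P (σ i) w

/-- Initial states of the soundness problem `Π^sound_P`, over `S × Set W`. -/
def soundInit (ι : Set S) (P : S → W → Prop) : Set (S × Set W) :=
  {p | p.1 ∈ ι ∧ ∀ w, P p.1 w → w ∈ p.2}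

/-- Transition relation of the soundness problem `Π^sound_P`. -/
def soundTrans (τ : Set (S × S)) (P : S → W → Prop) :
    Set ((S × Set W) × (S × Set W)) :=
  {q | (q.1.1, q.2.1) ∈ τ ∧ ∀ w, (w ∈ q.1.2 ∧ P q.1.1 w ∧ P q.2.1 w) → w ∈ q.2.2}

/-- Bad states of the soundness problem `Π^sound_P`. -/
def soundBad (β : Set S) (P : S → W → Prop) : Set (S × Set W) :=
  {p | p.1 ∈ β ∧ ∀ w, P p.1 w → w ∉ p.2}

/-- Initial states of the extended problem `Π^w_P`, over `S × W`. -/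
def extInit (ι : Set S) (P : S → W → Prop) : Set (S × W) :=
  {p | p.1 ∈ ι ∧ P p.1 p.2}

/-- Transition relation of the extended problem `Π^w_P`. -/
def extTrans (τ : Set (S × S)) (P : S → W → Prop) : Set ((S × W) × (S × W)) :=
  {q | (q.1.1, q.2.1) ∈ τ ∧ q.2.2 = q.1.2 ∧ P q.1.1 q.1.2 ∧ P q.2.1 q.2.2}

/-- Bad states of the extended problem `Π^w_P`. -/
def extBad (β : Set S) (P : S → W → Prop) : Set (S × W) :=
  {p | p.1 ∈ β ∧ P p.1 p.2}

/-- Characterization of sound prophecy as a safety problem (Theorem 5.2): `P` is a sound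
prophecy for `(ι, τ, β)` iff the soundness problem `Π^sound_P` is safe. -/
theorem soundProphecy_iff_soundProblem_safe (ι β : Set S) (τ : Set (S × S))
    (P : S → W → Prop) :
    IsSoundProphecy ι τ β P ↔ IsSafe (soundInit ι P) (soundTrans τ P) (soundBad β P) := by
  constructor
  · rintro h ⟨n, σ, htr, h0, hn⟩
    obtain ⟨w, hw⟩ := h n (fun i => (σ i).1) (fun i hi => (htr i hi).1) h0.1 hn.1
    have key : ∀ i ≤ n, w ∈ (σ i).2 := by
      intro i
      induction i with
      | zero => intro hi; exact h0.2 w (hw 0 hi)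
      | succ k ih =>
        intro hi
        exact (htr k (by omega)).2 w ⟨ih (by omega), hw k (by omega), hw (k + 1) hi⟩
    exact hn.2 w (hw n le_rfl) (key n le_rfl)
  · intro h n σ htr h0 hn
    by_contra hne
    refine h ⟨n, fun i => (σ i, {w | ∀ j ≤ i, P (σ j) w}), ?_, ⟨h0, ?_⟩, ⟨hn, ?_⟩⟩
    · intro i hi
      refine ⟨htr i hi, ?_⟩
      rintro w ⟨hm, -, hP⟩ j hj
      rcases Nat.le_succ_iff.mp hj with hj | rfl
      · exact hm j hj
      · exact hP
    · intro w hw j hj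
      obtain rfl : j = 0 := by omega
      exact hw
    · intro w _ hm
      exact hne ⟨w, hm⟩
end

section
/- Prophecy preserves safety (Definition 5.1): let (ι, τ, β) be a safety problem over S, W a witness type, and P : S → W → Prop a sound prophecy for (ι, τ, β). Then (ι, τ, β) is safe if and only if the extended problem Π^w_P is safe. -/
variable {S W : Type*}

/-- Prophecy preserves safety (Definition 5.1): if `P` is a sound prophecy for
`(ι, τ, β)`, then `(ι, τ, β)` is safe iff the extended problem `Π^w_P` is safe. -/
theorem safe_iff_extended_safe_of_soundProphecy (ι β : Set S) (τ : Set (S × S))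
    (P : S → W → Prop) (h : IsSoundProphecy ι τ β P) :
    IsSafe ι τ β ↔ IsSafe (extInit ι P) (extTrans τ P) (extBad β P) := by
  constructor
  · rintro hs ⟨n, σ, ht, h0, hn⟩
    exact hs ⟨n, fun i => (σ i).1, fun i hi => (ht i hi).1, h0.1, hn.1⟩
  · rintro hs ⟨n, σ, ht, h0, hn⟩
    obtain ⟨w, hw⟩ := h n σ ht h0 hn
    exact hs ⟨n, fun i => (σ i, w),
      fun i hi => ⟨ht i hi, rfl, hw i hi.le, hw (i + 1) hi⟩,
      ⟨h0, hw 0 (Nat.zero_le n)⟩, ⟨hn, hw n le_rfl⟩⟩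
end

section
/- Soundness of the (Proph) rule (used in Theorem 5.4): let (ι, τ, β) be a safety problem over S, W a witness type, and P : S → W → Prop. If the soundness problem Π^sound_P is safe and the extended problem Π^w_P is safe, then (ι, τ, β) is safe. -/
variable {S W : Type*}

/-- Soundness of the (Proph) rule (used in Theorem 5.4): if the soundness problem
`Π^sound_P` is safe and the extended problem `Π^w_P` is safe, then `(ι, τ, β)` is safe. -/
theorem safe_of_proph_rule (ι β : Set S) (τ : Set (S × S)) (P : S → W → Prop)
    (hSound : IsSafe (soundInit ι P) (soundTrans τ P) (soundBad β P))
    (hExt : IsSafe (extInit ι P) (extTrans τ P) (extBad β P)) :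
    IsSafe ι τ β := by
  rintro ⟨n, σ, hτ, hι, hβ⟩
  apply hSound
  refine ⟨n, fun i => (σ i, {w | ∀ j ≤ i, P (σ j) w}), ?_, ⟨hι, ?_⟩, ⟨hβ, ?_⟩⟩
  · intro i hi
    refine ⟨hτ i hi, ?_⟩
    rintro w ⟨hw, -, hw'⟩ j hj
    rcases Nat.le_succ_iff.mp hj with h | h
    · exact hw j h
    · subst h
      exact hw'
  · intro w hw j hj
    obtain rfl := Nat.le_zero.mp hj
    exact hw
  · intro w _ hw
    apply hExt
    exact ⟨n, fun i => (σ i, w),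
      fun i hi => ⟨hτ i hi, rfl, hw i hi.le, hw (i + 1) hi⟩,
      ⟨hι, hw 0 (Nat.zero_le n)⟩, ⟨hβ, hw n le_rfl⟩⟩
end

section
/- Prophecy invariant conversion (Lemma A.1 / key step of Theorem 5.7): let (ι, τ, β) be a safety problem over S, W a witness type, and P : S → W → Prop. Let ξ ⊆ S × Set W be a safe inductive invariant of the soundness problem Π^sound_P, and let ψ ⊆ S × W be a safe inductive invariant of the extended problem Π^w_P. Then the set {s ∈ S | (s, {w ∈ W | (s, w) ∈ ψ}) ∈ ξ} is a safe inductive invariant of (ι, τ, β). -/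
variable {S W : Type*}

/-- `I` is an inductive invariant for the safety problem `(init, tr, bad)`. -/
def IsInductiveInv {A : Type*} (init : Set A) (tr : Set (A × A)) (I : Set A) : Prop :=
  init ⊆ I ∧ ∀ s s', s ∈ I → (s, s') ∈ tr → s' ∈ I

/-- `I` is a safe inductive invariant for the safety problem `(init, tr, bad)`. -/
def IsSafeInductiveInv {A : Type*} (init : Set A) (tr : Set (A × A)) (bad : Set A)
    (I : Set A) : Prop :=
  IsInductiveInv init tr I ∧ I ∩ bad = ∅

/-- Prophecy invariant conversion (Lemma A.1 / key step of Theorem 5.7): if `ξ` is a safe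
inductive invariant of the soundness problem `Π^sound_P` and `ψ` is a safe inductive
invariant of the extended problem `Π^w_P`, then `{s | (s, {w | (s, w) ∈ ψ}) ∈ ξ}` is a
safe inductive invariant of `(ι, τ, β)`. -/
theorem prophecy_invariant_conversion (ι β : Set S) (τ : Set (S × S)) (P : S → W → Prop)
    (ξ : Set (S × Set W)) (ψ : Set (S × W))
    (hξ : IsSafeInductiveInv (soundInit ι P) (soundTrans τ P) (soundBad β P) ξ)
    (hψ : IsSafeInductiveInv (extInit ι P) (extTrans τ P) (extBad β P) ψ) :
    IsSafeInductiveInv ι τ β {s : S | (s, {w : W | (s, w) ∈ ψ}) ∈ ξ} := by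
  obtain ⟨⟨hξi, hξt⟩, hξb⟩ := hξ
  obtain ⟨⟨hψi, hψt⟩, hψb⟩ := hψ
  refine ⟨⟨?_, ?_⟩, ?_⟩
  · intro s hs
    exact hξi ⟨hs, fun w hw => hψi ⟨hs, hw⟩⟩
  · intro s s' hs hst
    exact hξt _ _ hs ⟨hst, fun w hw => hψt (s, w) (s', w) hw.1 ⟨hst, rfl, hw.2.1, hw.2.2⟩⟩
  · refine Set.eq_empty_iff_forall_notMem.mpr ?_
    rintro s ⟨hs, hb⟩
    refine Set.eq_empty_iff_forall_notMem.mp hξb (s, {w : W | (s, w) ∈ ψ}) ⟨hs, hb, ?_⟩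
    intro w hP hw
    exact Set.eq_empty_iff_forall_notMem.mp hψb (s, w) ⟨hw, hb, hP⟩
end

section
/- Invariant construction for (Proph-Fwd) (claim at the end of Section 5.2): let (ι, τ, β) be a safety problem over S, W a witness type, and P : S → W → Prop with ι ⊆ {s | ∃ w, P s w} and P forward-preserved pointwise ((s, s') ∈ τ and P s w imply P s' w). If ψ ⊆ S × W is a safe inductive invariant of the extended problem Π^w_P, then {s ∈ S | ∃ w, P s w ∧ (s, w) ∈ ψ} is a safe inductive invariant of (ι, τ, β). -/
variable {S W : Type*}

/-- Invariant construction for (Proph-Fwd): under the (Proph-Fwd) side conditions, if `ψ`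
is a safe inductive invariant of the extended problem `Π^w_P`, then
`{s | ∃ w, P s w ∧ (s, w) ∈ ψ}` is a safe inductive invariant of `(ι, τ, β)`. -/
theorem proph_fwd_invariant_construction (ι β : Set S) (τ : Set (S × S)) (P : S → W → Prop)
    (hinit : ι ⊆ {s | ∃ w, P s w})
    (hpres : ∀ s s' w, (s, s') ∈ τ → P s w → P s' w)
    (ψ : Set (S × W))
    (hψ : IsSafeInductiveInv (extInit ι P) (extTrans τ P) (extBad β P) ψ) :
    IsSafeInductiveInv ι τ β {s : S | ∃ w, P s w ∧ (s, w) ∈ ψ} := by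
  obtain ⟨⟨h0, h1⟩, h2⟩ := hψ
  refine ⟨⟨?_, ?_⟩, ?_⟩
  · intro s hs
    obtain ⟨w, hw⟩ := hinit hs
    exact ⟨w, hw, h0 ⟨hs, hw⟩⟩
  · rintro s s' ⟨w, hw, hm⟩ ht
    have hw2 := hpres s s' w ht hw
    exact ⟨w, hw2, h1 (s, w) (s', w) hm ⟨ht, rfl, hw, hw2⟩⟩
  · apply Set.eq_empty_of_forall_notMem
    rintro s ⟨⟨w, hw, hm⟩, hb⟩
    exact Set.notMem_empty (s, w) (h2 ▸ ⟨hm, hb, hw⟩)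
end

section
/- Soundness of the (Proph-Select) heuristic: let (ι, τ, β) be a safety problem over S, W a witness type, P : S → W → Prop, and θ ⊆ S. Suppose: (1) ι ⊆ {s | ∃ w, P s w}; (2) the set {s | ∃ w, P s w} is closed under τ; (3) every s ∉ θ satisfies P s w for all w ∈ W; (4) θ is closed under τ ((s, s') ∈ τ and s ∈ θ imply s' ∈ θ); and (5) if P s w, s ∈ θ, and (s, s') ∈ τ, then P s' w. Then P is a sound prophecy for (ι, τ, β). -/
variable {S W : Type*}

/-- Soundness of the (Proph-Select) heuristic. -/
theorem soundProphecy_of_proph_select (ι β : Set S) (τ : Set (S × S)) (P : S → W → Prop)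
    (θ : Set S)
    (h1 : ι ⊆ {s | ∃ w, P s w})
    (h2 : ∀ s s', s ∈ {s | ∃ w, P s w} → (s, s') ∈ τ → s' ∈ {s | ∃ w, P s w})
    (h3 : ∀ s ∉ θ, ∀ w : W, P s w)
    (h4 : ∀ s s', (s, s') ∈ τ → s ∈ θ → s' ∈ θ)
    (h5 : ∀ s s' w, P s w → s ∈ θ → (s, s') ∈ τ → P s' w) :
    IsSoundProphecy ι τ β P := by
  intro n σ hσ h0 hb
  clear hb
  induction n with
  | zero =>
    obtain ⟨w, hw⟩ := h1 h0
    refine ⟨w, fun i hi => ?_⟩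
    obtain rfl : i = 0 := by omega
    exact hw
  | succ n ih =>
    obtain ⟨w, hw⟩ := ih (fun i hi => hσ i (by omega))
    have hstep := hσ n (by omega)
    by_cases hθ : σ n ∈ θ
    · refine ⟨w, fun i hi => ?_⟩
      rcases Nat.lt_or_ge n i with h | h
      · obtain rfl : i = n + 1 := by omega
        exact h5 _ _ w (hw n le_rfl) hθ hstep
      · exact hw i h
    · obtain ⟨w', hw'⟩ := h2 _ _ ⟨w, hw n le_rfl⟩ hstep
      refine ⟨w', fun i hi => ?_⟩
      rcases Nat.lt_or_ge n i with h | h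
      · obtain rfl : i = n + 1 := by omega
        exact hw'
      · refine h3 _ (fun hiθ => hθ ?_) w'
        have aux : ∀ k, i + k ≤ n → σ (i + k) ∈ θ := by
          intro k
          induction k with
          | zero => intro _; exact hiθ
          | succ k ihk =>
            intro hk
            exact h4 _ _ (hσ (i + k) (by omega)) (ihk (by omega))
        have := aux (n - i) (by omega)
        rwa [Nat.add_sub_cancel' h] at this
end

section
/- Invariant construction for (Proph-Select) (claim at the end of Section 5.2): let (ι, τ, β) be a safety problem over S, W a nonempty witness type, P : S → W → Prop, and θ ⊆ S satisfying: (1) ι ⊆ {s | ∃ w, P s w}; (2) the set {s | ∃ w, P s w} is closed under τ; (3) every s ∉ θ satisfies P s w for all w ∈ W; (4) θ is closed under τ; and (5) if P s w, s ∈ θ, and (s, s') ∈ τ, then P s' w. If ψ ⊆ S × W is a safe inductive invariant of the extended problem Π^w_P, then the set {s ∈ S | (s ∉ θ ∧ ∀ w, (s, w) ∈ ψ) ∨ (s ∈ θ ∧ ∃ w, P s w ∧ (s, w) ∈ ψ)} is a safe inductive invariant of (ι, τ, β). -/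
variable {S W : Type*}

/-- Invariant construction for (Proph-Select): under the (Proph-Select) side conditions,
if `ψ` is a safe inductive invariant of the extended problem `Π^w_P`, then
`{s | (s ∉ θ ∧ ∀ w, (s, w) ∈ ψ) ∨ (s ∈ θ ∧ ∃ w, P s w ∧ (s, w) ∈ ψ)}` is a safe
inductive invariant of `(ι, τ, β)`. -/
theorem proph_select_invariant_construction [Nonempty W] (ι β : Set S) (τ : Set (S × S))
    (P : S → W → Prop) (θ : Set S)
    (h1 : ι ⊆ {s | ∃ w, P s w})
    (h2 : ∀ s s', s ∈ {s | ∃ w, P s w} → (s, s') ∈ τ → s' ∈ {s | ∃ w, P s w})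
    (h3 : ∀ s ∉ θ, ∀ w : W, P s w)
    (h4 : ∀ s s', (s, s') ∈ τ → s ∈ θ → s' ∈ θ)
    (h5 : ∀ s s' w, P s w → s ∈ θ → (s, s') ∈ τ → P s' w)
    (ψ : Set (S × W))
    (hψ : IsSafeInductiveInv (extInit ι P) (extTrans τ P) (extBad β P) ψ) :
    IsSafeInductiveInv ι τ β
      {s : S | (s ∉ θ ∧ ∀ w, (s, w) ∈ ψ) ∨ (s ∈ θ ∧ ∃ w, P s w ∧ (s, w) ∈ ψ)} := by
  obtain ⟨⟨hi, ht⟩, hb⟩ := hψ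
  have hstep : ∀ s s' w, (s, s') ∈ τ → P s w → P s' w → (s, w) ∈ ψ → (s', w) ∈ ψ :=
    fun s s' w a b c d => ht (s, w) (s', w) d ⟨a, rfl, b, c⟩
  have hbad : ∀ s w, (s, w) ∈ ψ → s ∈ β → P s w → False := fun s w a b c => by
    have h : (s, w) ∈ ψ ∩ extBad β P := ⟨a, b, c⟩
    rw [hb] at h
    exact h
  refine ⟨⟨?_, ?_⟩, ?_⟩
  · intro s hs
    by_cases hθ : s ∈ θ
    · obtain ⟨w, hw⟩ := h1 hs
      exact Or.inr ⟨hθ, w, hw, hi ⟨hs, hw⟩⟩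
    · exact Or.inl ⟨hθ, fun w => hi ⟨hs, h3 s hθ w⟩⟩
  · rintro s s' (⟨hθ, hall⟩ | ⟨hθ, w, hw, hmem⟩) hτ
    · by_cases hθ' : s' ∈ θ
      · obtain ⟨w, hw⟩ := h2 s s' ⟨Classical.arbitrary W, h3 s hθ _⟩ hτ
        exact Or.inr ⟨hθ', w, hw, hstep s s' w hτ (h3 s hθ w) hw (hall w)⟩
      · exact Or.inl ⟨hθ', fun w => hstep s s' w hτ (h3 s hθ w) (h3 s' hθ' w) (hall w)⟩
    · have hw' := h5 s s' w hw hθ hτ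
      exact Or.inr ⟨h4 s s' hτ hθ, w, hw', hstep s s' w hτ hw hw' hmem⟩
  · rw [Set.eq_empty_iff_forall_notMem]
    rintro s ⟨⟨hθ, hall⟩ | ⟨hθ, w, hw, hmem⟩, hβ⟩
    · exact hbad s (Classical.arbitrary W) (hall _) hβ (h3 s hθ _)
    · exact hbad s w hmem hβ hw
end

section
/- In the team token-passing protocol over a type T, the set φ = {s | (∃ x, a x ∧ ¬ d x) ∨ (∀ x, ¬ p₁ x ∨ ¬ p₂ x)} is a safe inductive invariant of the safety problem (ι, τ, β): it contains all initial states, is closed under τ, and is disjoint from the bad states (Section 2.2). -/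
/-- States of the team token-passing protocol over `T`: four predicates `(a, d, p₁, p₂)`. -/
abbrev TeamState (T : Type*) : Type _ := (T → Prop) × (T → Prop) × (T → Prop) × (T → Prop)

namespace Team

/-- Pointwise update of a predicate `f` at `x` to the value `b`. -/
def upd {T : Type*} (f : T → Prop) (x : T) (b : Prop) : T → Prop :=
  fun y => (y = x ∧ b) ∨ (y ≠ x ∧ f y)

variable (T : Type*)

/-- Initial states: all second players hold no tokens. -/
def ι : Set (TeamState T) := {s | ∀ x, ¬ s.2.2.2 x}

/-- Bad states: all dealers hold a token and some team has both players holding tokens. -/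
def β : Set (TeamState T) := {s | (∀ x, s.2.1 x) ∧ ∃ y, s.2.2.1 y ∧ s.2.2.2 y}

/-- Transition `τ₁`: a dealer of an active team passes a token to some first player. -/
def τ₁ : Set (TeamState T × TeamState T) :=
  {q | ∃ x y, q.1.1 x ∧ q.1.2.1 x ∧ q.2.1 = q.1.1 ∧
    q.2.2.1 = upd q.1.2.1 x False ∧ q.2.2.2.1 = upd q.1.2.2.1 y True ∧
    q.2.2.2.2 = q.1.2.2.2}

/-- Transition `τ₂`: a first player passes a token to the second player of the team. -/
def τ₂ : Set (TeamState T × TeamState T) :=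
  {q | ∃ x, q.1.2.2.1 x ∧ q.2.1 = q.1.1 ∧ q.2.2.1 = q.1.2.1 ∧
    q.2.2.2.1 = upd q.1.2.2.1 x False ∧ q.2.2.2.2 = upd q.1.2.2.2 x True}

/-- Transition `τ₃`: a dealer of an inactive team gains a token. -/
def τ₃ : Set (TeamState T × TeamState T) :=
  {q | ∃ x, ¬ q.1.1 x ∧ q.2.1 = q.1.1 ∧ q.2.2.1 = upd q.1.2.1 x True ∧
    q.2.2.2.1 = q.1.2.2.1 ∧ q.2.2.2.2 = q.1.2.2.2}

/-- The full transition relation. -/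
def τ : Set (TeamState T × TeamState T) := τ₁ T ∪ τ₂ T ∪ τ₃ T

/-- The invariant `(∃ x, a x ∧ ¬ d x) ∨ (∀ x, ¬ p₁ x ∨ ¬ p₂ x)`. -/
def φ : Set (TeamState T) :=
  {s | (∃ x, s.1 x ∧ ¬ s.2.1 x) ∨ (∀ x, ¬ s.2.2.1 x ∨ ¬ s.2.2.2 x)}

end Team

/-- In the team token-passing protocol over `T`, the set
`φ = {s | (∃ x, a x ∧ ¬ d x) ∨ (∀ x, ¬ p₁ x ∨ ¬ p₂ x)}` is a safe inductive invariant of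
the safety problem `(ι, τ, β)`. -/
theorem team_phi_safeInductiveInv (T : Type*) :
    IsSafeInductiveInv (Team.ι T) (Team.τ T) (Team.β T) (Team.φ T) := by
  refine ⟨⟨fun s hs => Or.inr fun x => Or.inr (hs x), ?_⟩, ?_⟩
  · rintro ⟨a, d, p, q⟩ ⟨a', d', p', q'⟩ hs ((h | h) | h)
    · obtain ⟨x, y, hax, hdx, h1, h2, h3, h4⟩ := h
      dsimp only at hax hdx h1 h2 h3 h4
      subst h1 h2 h3 h4
      exact Or.inl ⟨x, hax, by simp [Team.upd]⟩
    · obtain ⟨x, hpx, h1, h2, h3, h4⟩ := h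
      dsimp only at hpx h1 h2 h3 h4
      subst h1 h2 h3 h4
      rcases hs with hs | hs
      · exact Or.inl hs
      · refine Or.inr fun y => ?_
        have hy := hs y
        dsimp only [Team.upd] at hy ⊢
        tauto
    · obtain ⟨x, hax, h1, h2, h3, h4⟩ := h
      dsimp only at hax h1 h2 h3 h4
      subst h1 h2 h3 h4
      rcases hs with ⟨y, hy, hdy⟩ | hs
      · refine Or.inl ⟨y, hy, ?_⟩
        rintro (⟨rfl, -⟩ | ⟨-, h⟩)
        · exact hax hy
        · exact hdy h
      · exact Or.inr hs
  · ext s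
    constructor
    · rintro ⟨⟨x, -, hd⟩ | h, hall, y, h1, h2⟩
      · exact hd (hall x)
      · exact (h y).elim (fun k => k h1) (fun k => k h2)
    · exact False.elim
end

section
/- In the dealer-token protocol with a binary token relation over a type T, the set φ = {(a, d) | ∃ x, ¬ a x ∧ ∀ y, d x y} is a safe inductive invariant of the safety problem (ι, τ, β): it contains all initial states, is closed under τ, and is disjoint from the bad states (Sections 2.3 and Example 5.8). -/
/-- States of the dealer-token protocol over `T`: a predicate `a` and a binary relation `d`. -/
abbrev DTState (T : Type*) : Type _ := (T → Prop) × (T → T → Prop)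

namespace DT

variable (T : Type*)

/-- Initial states: some team is inactive, and dealers hold all tokens. -/
def ι : Set (DTState T) := {s | (∃ x, ¬ s.1 x) ∧ ∀ x y, s.2 x y}

/-- Bad states: every dealer has lost at least one token. -/
def β : Set (DTState T) := {s | ∀ x, ∃ y, ¬ s.2 x y}

/-- Transition: a dealer of an active team loses one of its tokens;
the `a` component is unchanged. -/
def τ : Set (DTState T × DTState T) :=
  {q | q.2.1 = q.1.1 ∧
    ∃ x₀ y₀, q.1.1 x₀ ∧ ∀ x y, (q.2.2 x y ↔ (q.1.2 x y ∧ (x ≠ x₀ ∨ y ≠ y₀)))}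

/-- The invariant: there is an inactive team whose dealer holds all of its tokens. -/
def φ : Set (DTState T) := {s | ∃ x, ¬ s.1 x ∧ ∀ y, s.2 x y}

end DT

/-- In the dealer-token protocol over `T`, the set `φ = {(a, d) | ∃ x, ¬ a x ∧ ∀ y, d x y}`
is a safe inductive invariant of the safety problem `(ι, τ, β)`. -/
theorem dt_phi_safeInductiveInv (T : Type*) :
    IsSafeInductiveInv (DT.ι T) (DT.τ T) (DT.β T) (DT.φ T) := by
  refine ⟨⟨?_, ?_⟩, ?_⟩
  · rintro s ⟨⟨x, hx⟩, h⟩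
    exact ⟨x, hx, h x⟩
  · rintro ⟨a, d⟩ ⟨b, e⟩ ⟨x, hx, h⟩ ⟨ha, x₀, y₀, h0, ht⟩
    refine ⟨x, fun hax => hx ((congrFun ha x) ▸ hax), fun y => (ht x y).2 ⟨h y, Or.inl ?_⟩⟩
    rintro rfl
    exact hx h0
  · rw [Set.eq_empty_iff_forall_notMem]
    rintro s ⟨⟨x, _, h⟩, hb⟩
    obtain ⟨y, hy⟩ := hb x
    exact hy (h y)
end
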